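/- arXiv:1909.05230 — 4 statements merged into one kernel-verified Lean document; each statement's English description precedes it below -/
import Mathlib

section
/- For every ε > 0 there exists τ = τ(ε) ∈ ℕ such that for every finite collection {(x̂_j, n_j)}_{j=1}^{ℓ} ⊂ 𝒢̂ there exist integers 0 ≤ τ_j ≤ τ (for 2 ≤ j ≤ ℓ) and a point ẑ ∈ N such that, setting r_1 = 0 and r_j = r_{j−1} + n_{j−1} + τ_j for 2 ≤ j ≤ ℓ, one has d(g^m(x̂_j), g^{r_j + m}(ẑ)) ≤ ε for all 0 ≤ m ≤ n_j and all 1 ≤ j ≤ ℓ. (Specification at all scales, with gaps bounded by τ, for the collection 𝒢̂ of good orbit segments of g.) -/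
/-- The set `Ω_ρ = ⋃_{x ∈ Ω} B_ρ(x)`. -/
def Omr {N : Type*} [MetricSpace N] (Ω : Set N) (ρ : ℝ) : Set N :=
  ⋃ x ∈ Ω, Metric.ball x ρ

/-- The collection of good orbit segments: `(x̂,n)` is good if `n = 0` or for every
`j ∈ {1,…,n}` the average of `χ_A` along the last `j` iterates is `< α`. -/
def goodSeg {X : Type*} (f : X → X) (A : Set X) (α : ℝ) : Set (X × ℕ) :=
  {p | p.2 = 0 ∨ ∀ j : ℕ, 1 ≤ j → j ≤ p.2 →
    (1 / (j : ℝ)) * ∑ i ∈ Finset.Ico (p.2 - j) p.2,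
      Set.indicator A (fun _ => (1 : ℝ)) (f^[i] p.1) < α}

/-!
Fix a good segment `(x, n)` and a point `w` close to `g^n x`, and follow the inverse branches of
`g` backwards along the orbit of `x`. The step from `g^(i+1) x` to `g^i x` multiplies distances by
at most `L` if `g^i x` lies in `Ω_ρ` and by at most `λ_u` otherwise, so the bound on the frequency
of visits to `Ω_ρ` along the last `j` iterates makes the last `j` steps contract by `θ_α ^ j ≤ 1`.
The pulled-back orbit therefore never leaves the uniform radius on which inverse branches exist, and
stays at least as close to the orbit of `x` as `w` is to `g^n x`. By compactness, topological
exactness gives one time `τ` after which every ball of a given radius has spread over the whole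
space. A point shadowing the segments after the first is then reached in time `τ` from near the end
of the first segment, and pulling back along that segment glues it on.
-/

open Filter Topology Finset

section UniformExactness

theorem eventually_forall_of_eventually_prod_nhds {ι X : Type*} [TopologicalSpace X]
    [CompactSpace X] {l : Filter ι} {P : ι → X → Prop}
    (h : ∀ x, ∀ᶠ q : ι × X in l ×ˢ 𝓝 x, P q.1 q.2) : ∀ᶠ a in l, ∀ x, P a x := by
  have huniv : {q : ι × X | P q.1 q.2} ∈ l ×ˢ 𝓝ˢ Set.univ :=
    isCompact_univ.mem_prod_nhdsSet_of_forall fun x _ => h x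
  rwa [nhdsSet_univ, mem_prod_top] at huniv

/-- Topological exactness: every nonempty open set is eventually mapped onto the whole space. -/
def IsTopologicallyExact {X : Type*} [TopologicalSpace X] (g : X → X) : Prop :=
  ∀ U : Set X, IsOpen U → U.Nonempty → ∃ n : ℕ, g^[n] '' U = Set.univ

theorem IsTopologicallyExact.surjective {X : Type*} [TopologicalSpace X] [T1Space X] {g : X → X}
    (hg : IsTopologicallyExact g) : Function.Surjective g := by
  intro p
  by_contra hp
  obtain ⟨n, hn⟩ := hg {p}ᶜ isOpen_compl_singleton ⟨g p, fun h => hp ⟨p, h⟩⟩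
  obtain ⟨q, hq, hqp⟩ : p ∈ g^[n] '' {p}ᶜ := hn ▸ Set.mem_univ p
  cases n with
  | zero => exact hq hqp
  | succ n => exact hp ⟨g^[n] q, (Function.iterate_succ_apply' g n q).symm.trans hqp⟩

theorem image_iterate_eq_univ_of_le {X : Type*} {g : X → X} (hg : Function.Surjective g)
    {U : Set X} {m n : ℕ} (hmn : m ≤ n) (hU : g^[m] '' U = Set.univ) :
    g^[n] '' U = Set.univ := by
  rw [← Nat.sub_add_cancel hmn, Function.iterate_add, Set.image_comp, hU, Set.image_univ,
    (hg.iterate _).range_eq]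

theorem IsTopologicallyExact.eventually_image_ball_eq_univ {X : Type*} [MetricSpace X]
    [CompactSpace X] {g : X → X} (hg : IsTopologicallyExact g) {r : ℝ} (hr : 0 < r) :
    ∀ᶠ n in atTop, ∀ x, g^[n] '' Metric.ball x r = Set.univ := by
  refine eventually_forall_of_eventually_prod_nhds fun p => ?_
  obtain ⟨k, hk⟩ := hg (Metric.ball p (r / 2)) Metric.isOpen_ball ⟨p, by simpa using hr⟩
  filter_upwards [(eventually_ge_atTop k).prod_mk (Metric.ball_mem_nhds p (half_pos hr))]
    with ⟨n, x⟩ ⟨hkn, hx⟩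
  have hball : Metric.ball p (r / 2) ⊆ Metric.ball x r :=
    Metric.ball_subset_ball' (by linarith [Metric.mem_ball'.1 hx])
  exact Set.univ_subset_iff.1 <|
    (image_iterate_eq_univ_of_le hg.surjective hkn hk).symm.subset.trans (Set.image_mono hball)

end UniformExactness

section InverseBranches

variable {X : Type*} [PseudoMetricSpace X] {g : X → X} {c : X → ℝ} {δ : ℝ}

/-- Along each orbit step `x ↦ g x`, an inverse branch of `g` with rate `c x` is defined on the
`δ`-ball around `g x`. The branch is encoded pointwise, as a choice of preimages, and only distances
to `x` are controlled: shadowing the orbit of `x` needs no more. -/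
def HasInverseBranches (g : X → X) (c : X → ℝ) (δ : ℝ) : Prop :=
  ∀ x w, dist w (g x) < δ → ∃ y, g y = w ∧ dist y x ≤ c x * dist w (g x)

theorem eventually_hasInverseBranches [CompactSpace X] (hg : Continuous g) {K : X → ℝ}
    (hbranch : ∀ p, ∃ U ∈ 𝓝 p, g '' U ∈ 𝓝 (g p) ∧
      ∀ y ∈ U, ∀ z ∈ U, dist y z ≤ K p * dist (g y) (g z))
    (hKc : ∀ p, ∀ᶠ x in 𝓝 p, K p ≤ c x) :
    ∀ᶠ δ in 𝓝[>] 0, HasInverseBranches g c δ := by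
  refine eventually_forall_of_eventually_prod_nhds fun p => ?_
  obtain ⟨U, hU, hgU, hdist⟩ := hbranch p
  obtain ⟨r, hr, hball⟩ := Metric.mem_nhds_iff.1 hgU
  have hδ : ∀ᶠ δ in 𝓝[>] (0 : ℝ), δ < r / 2 :=
    nhdsWithin_le_nhds (eventually_lt_nhds (half_pos hr))
  have hgx : ∀ᶠ x in 𝓝 p, dist (g x) (g p) < r / 2 :=
    hg.continuousAt.eventually (Metric.ball_mem_nhds (g p) (half_pos hr))
  filter_upwards [hδ.prod_mk (hgx.and ((hKc p).and hU))] with ⟨δ, x⟩ ⟨hδ, hgx, hKc, hxU⟩ w hw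
  obtain ⟨y, hyU, rfl⟩ : w ∈ g '' U :=
    hball (Metric.mem_ball.2 (by linarith [dist_triangle w (g x) (g p)]))
  exact ⟨y, rfl, (hdist y hyU x hxU).trans (by gcongr)⟩

theorem HasInverseBranches.exists_iterate_eq (hgc : HasInverseBranches g c δ) (hc : ∀ x, 0 ≤ c x)
    (n : ℕ) (x : X) (hprod : ∀ m ≤ n, ∏ i ∈ Ico m n, c (g^[i] x) ≤ 1) (w : X)
    (hw : dist w (g^[n] x) < δ) :
    ∃ y, g^[n] y = w ∧ ∀ m ≤ n,
      dist (g^[m] y) (g^[m] x) ≤ (∏ i ∈ Ico m n, c (g^[i] x)) * dist w (g^[n] x) := by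
  induction n generalizing x with
  | zero => exact ⟨w, rfl, by simp⟩
  | succ n ih =>
    have hshift (m : ℕ) :
        ∏ i ∈ Ico m n, c (g^[i] (g x)) = ∏ i ∈ Ico (m + 1) (n + 1), c (g^[i] x) :=
      prod_Ico_add' (fun i => c (g^[i] x)) m n 1
    simp only [Function.iterate_succ_apply] at hw
    obtain ⟨v, hvw, hv⟩ :=
      ih (g x) (fun m hm => hshift m ▸ hprod (m + 1) (Nat.succ_le_succ hm)) hw
    simp only [hshift] at hv
    have hv₀ : dist v (g x) ≤ (∏ i ∈ Ico 1 (n + 1), c (g^[i] x)) * dist w (g^[n] (g x)) :=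
      hv 0 n.zero_le
    have hvδ : dist v (g x) < δ :=
      (hv₀.trans (mul_le_of_le_one_left dist_nonneg (hprod 1 (by lia)))).trans_lt hw
    obtain ⟨y, rfl, hy⟩ := hgc x v hvδ
    refine ⟨y, hvw, ?_⟩
    rintro (_ | m) hm
    · calc dist y x ≤ c x * dist (g y) (g x) := hy
        _ ≤ c x * ((∏ i ∈ Ico 1 (n + 1), c (g^[i] x)) * dist w (g^[n] (g x))) :=
          mul_le_mul_of_nonneg_left hv₀ (hc x)
        _ = (∏ i ∈ Ico 0 (n + 1), c (g^[i] x)) * dist w (g^[n + 1] x) := by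
          rw [prod_eq_prod_Ico_succ_bot n.succ_pos, mul_assoc]; rfl
    · exact hv m (Nat.le_of_succ_le_succ hm)

end InverseBranches

section Specification

variable {X : Type*} [PseudoMetricSpace X] {g : X → X} {S : Set (X × ℕ)} {δ ε : ℝ} {τ : ℕ}

/-- Every point `δ`-close to the end of the orbit segment `p = (x, n)` is itself the end of an
orbit segment of length `n` that `ε`-shadows `p`. -/
def IsBackwardShadowable (g : X → X) (δ ε : ℝ) (p : X × ℕ) : Prop :=
  ∀ w, dist w (g^[p.2] p.1) < δ → ∃ y, g^[p.2] y = w ∧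
    ∀ m ≤ p.2, dist (g^[m] p.1) (g^[m] y) ≤ ε

/-- Specification at scale `ε` for a collection `S` of orbit segments, in the strong form where all
gaps equal `τ`; the `j`-th segment is then shadowed from time `∑ i < j, (n i + τ)` on. -/
def HasSpecification (g : X → X) (S : Set (X × ℕ)) (ε : ℝ) (τ : ℕ) : Prop :=
  ∀ (ℓ : ℕ) (x : ℕ → X) (n : ℕ → ℕ), (∀ j < ℓ, (x j, n j) ∈ S) →
    ∃ z, ∀ j < ℓ, ∀ m ≤ n j,
      dist (g^[m] (x j)) (g^[∑ i ∈ range j, (n i + τ) + m] z) ≤ ε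

theorem hasSpecification_of_isBackwardShadowable
    (hτ : ∀ x, g^[τ] '' Metric.ball x δ = Set.univ)
    (hS : ∀ p ∈ S, IsBackwardShadowable g δ ε p) : HasSpecification g S ε τ := by
  intro ℓ
  induction ℓ with
  | zero => exact fun x _ _ => ⟨x 0, fun j hj => absurd hj j.not_lt_zero⟩
  | succ ℓ ih =>
    intro x n hmem
    obtain ⟨z, hz⟩ := ih (fun j => x (j + 1)) (fun j => n (j + 1))
      fun j hj => hmem (j + 1) (Nat.succ_lt_succ hj)
    obtain ⟨w, hw, rfl⟩ : z ∈ g^[τ] '' Metric.ball (g^[n 0] (x 0)) δ := hτ _ ▸ Set.mem_univ z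
    obtain ⟨y, rfl, hy⟩ := hS _ (hmem 0 ℓ.succ_pos) w hw
    refine ⟨y, ?_⟩
    rintro (_ | j) hj m hm
    · simpa using hy m hm
    · have htime : ∑ i ∈ range (j + 1), (n i + τ) + m =
          (∑ i ∈ range j, (n (i + 1) + τ) + m) + (τ + n 0) := by
        rw [sum_range_succ']; ring
      rw [htime, Function.iterate_add_apply g _ (τ + n 0), Function.iterate_add_apply g τ]
      exact hz j (Nat.lt_of_succ_lt_succ hj) m hm

end Specification

section GoodSegments

variable {X : Type*}

theorem sum_indicator_le_of_mem_goodSeg {f : X → X} {A : Set X} {α : ℝ} {x : X} {m n : ℕ}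
    (hx : (x, n) ∈ goodSeg f A α) (hmn : m ≤ n) :
    ∑ i ∈ Ico m n, A.indicator (fun _ => (1 : ℝ)) (f^[i] x) ≤ α * (n - m : ℕ) := by
  rcases hmn.eq_or_lt with rfl | hlt
  · simp
  have havg := (hx.resolve_left (Nat.ne_zero_of_lt hlt)) (n - m) (by lia) (Nat.sub_le n m)
  have hpos : (0 : ℝ) < (n - m : ℕ) := by exact_mod_cast Nat.sub_pos_of_lt hlt
  rw [Nat.sub_sub_self hmn, one_div, inv_mul_lt_iff₀ hpos] at havg
  exact havg.le.trans_eq (mul_comm _ _)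

open Classical in
/-- The Lipschitz rate of inverse branches: `L` at points of `A`, and `lamu` elsewhere. -/
noncomputable def inverseRate (A : Set X) (L lamu : ℝ) (x : X) : ℝ :=
  if x ∈ A then L else lamu

variable {A : Set X} {L lamu α : ℝ}

theorem inverseRate_eq_mul_rpow_indicator (hlamu : lamu ≠ 0) (x : X) :
    inverseRate A L lamu x = lamu * (L / lamu) ^ A.indicator (fun _ => (1 : ℝ)) x := by
  by_cases hx : x ∈ A <;> simp [inverseRate, hx, mul_div_cancel₀, hlamu]

theorem le_inverseRate (hle : lamu ≤ L) (x : X) : lamu ≤ inverseRate A L lamu x := by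
  unfold inverseRate
  split_ifs <;> simp [hle]

theorem prod_inverseRate_le_pow {g : X → X} {x : X} {m n : ℕ} (hlamu : 0 < lamu) (hle : lamu ≤ L)
    (hx : (x, n) ∈ goodSeg g A α) (hmn : m ≤ n) :
    ∏ i ∈ Ico m n, inverseRate A L lamu (g^[i] x) ≤ (L ^ α * lamu ^ (1 - α)) ^ (n - m) := by
  have hratio : 1 ≤ L / lamu := (one_le_div hlamu).2 hle
  calc ∏ i ∈ Ico m n, inverseRate A L lamu (g^[i] x)
      = lamu ^ (n - m) *
          (L / lamu) ^ ∑ i ∈ Ico m n, A.indicator (fun _ => (1 : ℝ)) (g^[i] x) := by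
        simp only [inverseRate_eq_mul_rpow_indicator hlamu.ne', prod_mul_distrib, prod_const,
          Nat.card_Ico, Real.rpow_sum_of_pos (one_pos.trans_le hratio)]
    _ ≤ lamu ^ (n - m) * (L / lamu) ^ (α * (n - m : ℕ)) := by
        gcongr
        exact sum_indicator_le_of_mem_goodSeg hx hmn
    _ = (lamu * (L / lamu) ^ α) ^ (n - m) := by
        rw [Real.rpow_mul_natCast (by positivity), mul_pow]
    _ = (L ^ α * lamu ^ (1 - α)) ^ (n - m) := by
        rw [Real.div_rpow (hlamu.le.trans hle) hlamu.le, Real.rpow_sub hlamu, Real.rpow_one]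
        ring

theorem rpow_mul_rpow_lt_one_of_lt_log_div (hlamu : 0 < lamu) (hlamu_one : lamu < 1) (hL : 1 ≤ L)
    (hα : α < Real.log lamu / (Real.log lamu - Real.log L)) :
    L ^ α * lamu ^ (1 - α) < 1 := by
  have hlog : Real.log lamu - Real.log L < 0 := by
    linarith [Real.log_neg hlamu hlamu_one, Real.log_nonneg hL]
  rw [lt_div_iff_of_neg hlog] at hα
  rw [Real.rpow_def_of_pos (by linarith), Real.rpow_def_of_pos hlamu, ← Real.exp_add,
    Real.exp_lt_one_iff]
  linarith

theorem isBackwardShadowable_of_mem_goodSeg [PseudoMetricSpace X] {g : X → X} {δ ε : ℝ}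
    {p : X × ℕ} (hg : HasInverseBranches g (inverseRate A L lamu) δ) (hδε : δ ≤ ε)
    (hlamu : 0 < lamu) (hle : lamu ≤ L) (hθ : L ^ α * lamu ^ (1 - α) ≤ 1)
    (hp : p ∈ goodSeg g A α) : IsBackwardShadowable g δ ε p := by
  intro w hw
  have hL : 0 < L := hlamu.trans_le hle
  have hprod (m : ℕ) (hm : m ≤ p.2) :
      ∏ i ∈ Ico m p.2, inverseRate A L lamu (g^[i] p.1) ≤ 1 :=
    (prod_inverseRate_le_pow hlamu hle hp hm).trans (pow_le_one₀ (by positivity) hθ)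
  obtain ⟨y, hyw, hy⟩ := hg.exists_iterate_eq (fun x => hlamu.le.trans (le_inverseRate hle x))
    p.2 p.1 hprod w hw
  refine ⟨y, hyw, fun m hm => ?_⟩
  calc dist (g^[m] p.1) (g^[m] y) = dist (g^[m] y) (g^[m] p.1) := dist_comm _ _
    _ ≤ dist w (g^[p.2] p.1) :=
      (hy m hm).trans (mul_le_of_le_one_left dist_nonneg (hprod m hm))
    _ ≤ ε := hw.le.trans hδε

-- Near `p`, the rate must dominate the constant `K p` taken at `p`: this is why `Ω` is thickened.
theorem eventually_le_inverseRate_Omr {N : Type*} [MetricSpace N] {Ω : Set N} {K : N → ℝ} {ρ : ℝ}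
    (hle : lamu ≤ L) (hKΩ : ∀ x ∈ Ω, K x ≤ L) (hK : ∀ x ∉ Ω, K x ≤ lamu) (hρ : 0 < ρ) (p : N) :
    ∀ᶠ x in 𝓝 p, K p ≤ inverseRate (Omr Ω ρ) L lamu x := by
  filter_upwards [Metric.ball_mem_nhds p hρ] with x hx
  by_cases hp : p ∈ Ω
  · have hxΩ : x ∈ Omr Ω ρ := Set.mem_iUnion₂.2 ⟨p, hp, hx⟩
    rw [inverseRate, if_pos hxΩ]
    exact hKΩ p hp
  · exact (hK p hp).trans (le_inverseRate hle x)

end GoodSegments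

theorem goodSeg_specification_base_general {N : Type*} [MetricSpace N] [CompactSpace N]
    {g : N → N} (hg : Continuous g) {Lf : N → ℝ}
    (hbranch : ∀ x, ∃ U ∈ 𝓝 x, g '' U ∈ 𝓝 (g x) ∧
      ∀ y ∈ U, ∀ z ∈ U, dist y z ≤ Lf x * dist (g y) (g z))
    (hexact : IsTopologicallyExact g) {lamu L : ℝ} (hlamu : 0 < lamu) (hle : lamu ≤ L) {Ω : Set N}
    (hΩ : ∀ x ∈ Ω, Lf x ≤ L) (hΩc : ∀ x ∉ Ω, Lf x ≤ lamu) {ρ : ℝ} (hρ : 0 < ρ)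
    {α : ℝ} (hθ : L ^ α * lamu ^ (1 - α) ≤ 1) {ε : ℝ} (hε : 0 < ε) :
    ∃ τ, HasSpecification g (goodSeg g (Omr Ω ρ) α) ε τ := by
  have hsmall : ∀ᶠ δ in 𝓝[>] 0, HasInverseBranches g (inverseRate (Omr Ω ρ) L lamu) δ :=
    eventually_hasInverseBranches hg hbranch (eventually_le_inverseRate_Omr hle hΩ hΩc hρ)
  obtain ⟨δ, hδ, hδ₀, hδε⟩ := (hsmall.and (Ioc_mem_nhdsGT hε)).exists
  obtain ⟨τ, hτ⟩ := (hexact.eventually_image_ball_eq_univ hδ₀).exists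
  exact ⟨τ, hasSpecification_of_isBackwardShadowable hτ fun _ hp =>
    isBackwardShadowable_of_mem_goodSeg hδ hδε hlamu hle hθ hp⟩

/-- Specification at all scales for the collection `𝒢̂` of good orbit
segments of a topologically exact local diffeomorphism `g` with Lipschitz inverse
branches satisfying (H1)-(H2): for every `ε > 0` there is a uniform gap bound `τ` such
that any finite list of good orbit segments can be `ε`-shadowed by a single orbit with
gaps at most `τ`. -/
theorem goodSeg_specification_base
    {N : Type*} [MetricSpace N] [CompactSpace N] [ConnectedSpace N]
    (g : N → N) (hg : Continuous g)
    (Lf : N → ℝ) (hLfpos : ∀ x, 0 < Lf x)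
    -- `g` is a local diffeomorphism with Lipschitz inverse branches with constant `Lf x`
    (hbranch : ∀ x : N, ∃ U : Set N, IsOpen U ∧ x ∈ U ∧ Set.InjOn g U ∧
      IsOpen (g '' U) ∧ ∀ y ∈ U, ∀ z ∈ U, dist y z ≤ Lf x * dist (g y) (g z))
    -- `g` is topologically exact
    (hexact : ∀ U : Set N, IsOpen U → U.Nonempty → ∃ n : ℕ, g^[n] '' U = Set.univ)
    (lamu L : ℝ) (hlamu : lamu ∈ Set.Ioo (0 : ℝ) 1) (hL : 1 < L)
    (Ω : Set N) (hΩ : IsOpen Ω)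
    -- (H1)
    (hH1a : ∀ x ∈ Ω, Lf x ≤ L) (hH1b : ∀ x ∉ Ω, Lf x < lamu)
    -- (H2): a finite cover of `N` by injectivity domains of `g`
    (P : Finset (Set N)) (hPcov : ⋃₀ (P : Set (Set N)) = Set.univ)
    (hPinj : ∀ U ∈ P, Set.InjOn g U)
    (ρ : ℝ) (hρ : 0 < ρ)
    (α : ℝ) (hα : α ∈ Set.Ioo (0 : ℝ) 1)
    (hαlt : α < Real.log lamu / (Real.log lamu - Real.log L)) :
    ∀ ε : ℝ, 0 < ε → ∃ τ : ℕ,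
      ∀ ℓ : ℕ, ∀ x : ℕ → N, ∀ nseq : ℕ → ℕ,
        (∀ j < ℓ, (x j, nseq j) ∈ goodSeg g (Omr Ω ρ) α) →
        ∃ τs : ℕ → ℕ, ∃ r : ℕ → ℕ, ∃ z : N,
          (∀ j : ℕ, 1 ≤ j → j < ℓ → τs j ≤ τ) ∧
          r 0 = 0 ∧
          (∀ j : ℕ, j + 1 < ℓ → r (j + 1) = r j + nseq j + τs (j + 1)) ∧
          (∀ j < ℓ, ∀ m ≤ nseq j, dist (g^[m] (x j)) (g^[r j + m] z) ≤ ε) := by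
  intro ε hε
  have hnhds : ∀ x, ∃ U ∈ 𝓝 x, g '' U ∈ 𝓝 (g x) ∧
      ∀ y ∈ U, ∀ z ∈ U, dist y z ≤ Lf x * dist (g y) (g z) := fun x =>
    let ⟨U, hU, hxU, _, hgU, hdist⟩ := hbranch x
    ⟨U, hU.mem_nhds hxU, hgU.mem_nhds ⟨x, hxU, rfl⟩, hdist⟩
  obtain ⟨τ, hτ⟩ := goodSeg_specification_base_general hg hnhds hexact hlamu.1
    (hlamu.2.trans hL).le hH1a (fun x hx => (hH1b x hx).le) hρ
    (rpow_mul_rpow_lt_one_of_lt_log_div hlamu.1 hlamu.2 hL.le hαlt).le hε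
  refine ⟨τ, fun ℓ x nseq hgood => ?_⟩
  obtain ⟨z, hz⟩ := hτ ℓ x nseq hgood
  exact ⟨fun _ => τ, fun j => ∑ i ∈ range j, (nseq i + τ), z, fun _ _ _ => le_rfl, sum_range_zero _,
    fun j _ => (sum_range_succ _ j).trans (add_assoc _ _ _).symm, hz⟩
end

section
/- For any collection 𝒟̂ ⊂ N × ℕ of orbit segments for g, let 𝒟 = {(x,n) ∈ Λ × ℕ : (π(x), n) ∈ 𝒟̂} be its lift. Then the entropy of the lifted collection is bounded by that of the base collection: h(𝒟; f|_Λ) ≤ h(𝒟̂; g). -/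
open Filter

/-- The `n`-th Birkhoff sum of `φ` along the orbit of `x` under `T`. -/
noncomputable def birkhoff {X : Type*} (T : X → X) (φ : X → ℝ) (n : ℕ) (x : X) : ℝ :=
  ∑ k ∈ Finset.range n, φ (T^[k] x)

/-- The dynamical (Bowen) metric `d_n(x,y) = max_{0 ≤ k < n} d(T^k x, T^k y)`. -/
noncomputable def dynDist {X : Type*} [MetricSpace X] (T : X → X) (n : ℕ) (x y : X) : ℝ :=
  (((Finset.range n).sup fun k => nndist (T^[k] x) (T^[k] y) : NNReal) : ℝ)

/-- `E` is `(n,ε)`-separated for `T`. -/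
def IsDynSep {X : Type*} [MetricSpace X] (T : X → X) (n : ℕ) (ε : ℝ) (E : Finset X) : Prop :=
  ∀ x ∈ E, ∀ y ∈ E, x ≠ y → ε ≤ dynDist T n x y

/-- The partition sum `Λ^sep_n(𝒟,φ,ε)`: the supremum of `∑_{x ∈ E} e^{S_n φ(x)}` over
`(n,ε)`-separated sets `E ⊆ 𝒟_n`. -/
noncomputable def partSum {X : Type*} [MetricSpace X] (T : X → X) (φ : X → ℝ)
    (D : Set (X × ℕ)) (ε : ℝ) (n : ℕ) : ℝ :=
  sSup {s : ℝ | ∃ E : Finset X, (∀ x ∈ E, (x, n) ∈ D) ∧ IsDynSep T n ε E ∧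
    s = ∑ x ∈ E, Real.exp (birkhoff T φ n x)}

/-- The pressure `P(𝒟,φ,ε)` of `φ` on the collection of orbit segments `𝒟` at scale `ε`. -/
noncomputable def presScale {X : Type*} [MetricSpace X] (T : X → X) (φ : X → ℝ)
    (D : Set (X × ℕ)) (ε : ℝ) : EReal :=
  limsup (fun n : ℕ => ((Real.log (partSum T φ D ε n) / n : ℝ) : EReal)) atTop

/-- The pressure `P(𝒟,φ) = lim_{ε → 0} P(𝒟,φ,ε)`; since the scale pressure is monotone
as `ε` decreases, the limit is the supremum over positive scales. -/
noncomputable def pres {X : Type*} [MetricSpace X] (T : X → X) (φ : X → ℝ)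
    (D : Set (X × ℕ)) : EReal :=
  ⨆ (ε : ℝ) (_ : 0 < ε), presScale T φ D ε

/-- The entropy `h(𝒟) = P(𝒟,0)` of a collection of orbit segments. -/
noncomputable def entSeg {X : Type*} [MetricSpace X] (T : X → X) (D : Set (X × ℕ)) : EReal :=
  pres T (fun _ => (0 : ℝ)) D

/-- Topological entropy as pressure of the zero potential on all orbit segments. -/
noncomputable def htop {X : Type*} [MetricSpace X] (T : X → X) : EReal :=
  pres T (fun _ => (0 : ℝ)) Set.univ

/-- The attractor `Λ = ⋂_{n ≥ 0} f^n(M)`. -/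
def Lam {M : Type*} (f : M → M) : Set M :=
  ⋂ n : ℕ, f^[n] '' Set.univ

/-!
Sliding `x ∈ Λ` by the holonomy to the fiber over `b` gives a point `x'` with
`d(fᵏ x, fᵏ x') ≤ C · d(gᵏ (π x), gᵏ b)`, because holonomies commute with the dynamics. If `x` and
`y` both project into the Bowen ball of radius `ε / (4C)` around `b`, then `x'` and `y'` lie in one
fiber, where `f` does not expand, so `d_n(x, y) ≤ ε / 2 + d(x', y')`. An `(n, ε)`-separated set over
such a Bowen ball is thus carried injectively to an `ε / 2`-separated subset of `Λ`, whose
cardinality is bounded independently of `n` and `b`. Since `𝒟̂_n` is covered by the Bowen balls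
around a maximal separated set, the separated sets upstairs are larger than those downstairs by at
most a constant factor, which the exponential growth rate does not see.
-/

theorem exists_card_le_of_pairwise_le_dist {ι X : Type*} [PseudoMetricSpace X] {s : Set X}
    (hs : TotallyBounded s) {ε : ℝ} (hε : 0 < ε) :
    ∃ K : ℕ, ∀ (E : Finset ι) (φ : ι → X), (∀ i ∈ E, φ i ∈ s) →
      (∀ i ∈ E, ∀ j ∈ E, i ≠ j → ε ≤ dist (φ i) (φ j)) → E.card ≤ K := by
  obtain ⟨t, -, ht, hst⟩ := Metric.finite_approx_of_totallyBounded hs (ε / 2) (half_pos hε)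
  refine ⟨ht.toFinset.card, fun E φ hφ hsep ↦
    Finset.card_le_card_of_forall_subsingleton (fun i c ↦ dist (φ i) c < ε / 2) ?_ ?_⟩
  · intro i hi
    simpa using hst (hφ i hi)
  · rintro c - i ⟨hi, hic⟩ j ⟨hj, hjc⟩
    by_contra hne
    linarith [hsep i hi j hj hne, dist_triangle_right (φ i) (φ j) c]

section BowenMetric

variable {X : Type*} [MetricSpace X] (T : X → X) (n : ℕ)

theorem dynDist_eq_dist (x y : X) :
    dynDist T n x y = dist (fun k : Fin n ↦ T^[k] x) (fun k : Fin n ↦ T^[k] y) := by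
  rw [dist_pi_def, dynDist, Finset.sup_fin_univ fun k ↦ nndist (T^[k] x) (T^[k] y)]

theorem dynDist_self (x : X) : dynDist T n x x = 0 := by
  rw [dynDist_eq_dist, dist_self]

theorem dynDist_comm (x y : X) : dynDist T n x y = dynDist T n y x := by
  simp only [dynDist_eq_dist, dist_comm]

theorem dynDist_triangle (x y z : X) :
    dynDist T n x z ≤ dynDist T n x y + dynDist T n y z := by
  simpa only [dynDist_eq_dist] using dist_triangle _ _ _

theorem dynDist_nonneg (x y : X) : 0 ≤ dynDist T n x y :=
  NNReal.coe_nonneg _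

variable {T n}

theorem dynDist_le_iff {x y : X} {r : ℝ} (hr : 0 ≤ r) :
    dynDist T n x y ≤ r ↔ ∀ k < n, dist (T^[k] x) (T^[k] y) ≤ r := by
  rw [dynDist_eq_dist, dist_pi_le_iff hr, Fin.forall_iff]

theorem dist_iterate_le_dynDist {k : ℕ} (hk : k < n) (x y : X) :
    dist (T^[k] x) (T^[k] y) ≤ dynDist T n x y :=
  (dynDist_le_iff (dynDist_nonneg T n x y)).1 le_rfl k hk

end BowenMetric

section SeparatedSets

variable {X : Type*} [MetricSpace X] {T : X → X} {D : Set (X × ℕ)} {n : ℕ} {ε : ℝ}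

/-- The finite `(n, ε)`-separated subsets of `𝒟_n = {x | (x, n) ∈ 𝒟}`, whose cardinalities define
the entropy of `𝒟`. -/
def sepSets (T : X → X) (D : Set (X × ℕ)) (n : ℕ) (ε : ℝ) : Set (Finset X) :=
  {E | (∀ x ∈ E, (x, n) ∈ D) ∧ IsDynSep T n ε E}

theorem empty_mem_sepSets : ∅ ∈ sepSets T D n ε := by
  simp [sepSets, IsDynSep]

theorem mem_sepSets_of_subset {E F : Finset X} (hEF : E ⊆ F) (hF : F ∈ sepSets T D n ε) :
    E ∈ sepSets T D n ε :=
  ⟨fun x hx ↦ hF.1 x (hEF hx), fun x hx y hy ↦ hF.2 x (hEF hx) y (hEF hy)⟩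

theorem insert_mem_sepSets [DecidableEq X] {E : Finset X} {x : X} (hE : E ∈ sepSets T D n ε)
    (hx : (x, n) ∈ D) (hxE : ∀ y ∈ E, ε ≤ dynDist T n x y) :
    insert x E ∈ sepSets T D n ε := by
  refine ⟨(Finset.forall_mem_insert ..).2 ⟨hx, hE.1⟩, fun a ha b hb hab ↦ ?_⟩
  rcases Finset.mem_insert.1 ha with rfl | haE <;>
    rcases Finset.mem_insert.1 hb with rfl | hbE
  · exact absurd rfl hab
  · exact hxE b hbE
  · rw [dynDist_comm]
    exact hxE a haE
  · exact hE.2 a haE b hbE hab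

theorem partSum_zero :
    partSum T (fun _ ↦ 0) D ε n = sSup ((fun E ↦ (E.card : ℝ)) '' sepSets T D n ε) := by
  simp only [partSum, birkhoff, Finset.sum_const_zero, Real.exp_zero, Finset.sum_const, nsmul_one,
    sepSets, Set.image, Set.mem_ofPred_eq, and_assoc, eq_comm]

theorem partSum_zero_nonneg : 0 ≤ partSum T (fun _ ↦ 0) D ε n := by
  rw [partSum_zero]
  exact Real.sSup_nonneg (Set.forall_mem_image.2 fun E _ ↦ E.card.cast_nonneg)

theorem partSum_zero_le {B : ℝ} (hB : ∀ E ∈ sepSets T D n ε, (E.card : ℝ) ≤ B) :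
    partSum T (fun _ ↦ 0) D ε n ≤ B := by
  rw [partSum_zero]
  exact csSup_le (Set.Nonempty.image _ ⟨∅, empty_mem_sepSets⟩) (Set.forall_mem_image.2 hB)

theorem partSum_zero_eq_card {E : Finset X} (hE : MaximalFor (· ∈ sepSets T D n ε) Finset.card E) :
    partSum T (fun _ ↦ 0) D ε n = E.card := by
  rw [partSum_zero]
  refine IsGreatest.csSup_eq ⟨Set.mem_image_of_mem _ hE.1, Set.forall_mem_image.2 fun F hF ↦ ?_⟩
  exact_mod_cast hE.le hF

-- The orbit map `x ↦ (Tᵏ x)_{k < n}` is isometric from the Bowen metric into the compact space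
-- `Fin n → X`.
theorem exists_card_le_of_mem_sepSets [CompactSpace X] (T : X → X) (D : Set (X × ℕ)) (n : ℕ)
    (hε : 0 < ε) : ∃ K : ℕ, ∀ E ∈ sepSets T D n ε, E.card ≤ K := by
  obtain ⟨K, hK⟩ := exists_card_le_of_pairwise_le_dist (ι := X)
    (isCompact_univ (X := Fin n → X)).totallyBounded hε
  refine ⟨K, fun E hE ↦ hK E (fun x k ↦ T^[k] x) (fun _ _ ↦ Set.mem_univ _) ?_⟩
  simpa only [IsDynSep, dynDist_eq_dist] using hE.2

theorem exists_maximalFor_card_sepSets [CompactSpace X] (T : X → X) (D : Set (X × ℕ)) (n : ℕ)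
    (hε : 0 < ε) : ∃ E, MaximalFor (· ∈ sepSets T D n ε) Finset.card E := by
  obtain ⟨K, hK⟩ := exists_card_le_of_mem_sepSets T D n hε
  have hbdd : BddAbove (Finset.card '' sepSets T D n ε) := ⟨K, Set.forall_mem_image.2 hK⟩
  exact Set.Finite.exists_maximalFor' _ _ hbdd.finite ⟨∅, empty_mem_sepSets⟩

theorem exists_dynDist_lt_of_maximalFor_card {E : Finset X}
    (hE : MaximalFor (· ∈ sepSets T D n ε) Finset.card E) (hε : 0 < ε) {x : X}
    (hx : (x, n) ∈ D) : ∃ y ∈ E, dynDist T n x y < ε := by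
  classical
  by_contra! hfar
  have hxE : x ∉ E := fun h ↦ hε.not_ge (dynDist_self T n x ▸ hfar x h)
  have hcard := hE.le (insert_mem_sepSets hE.1 hx hfar)
  rw [Finset.card_insert_of_notMem hxE] at hcard
  exact Nat.not_succ_le_self _ hcard

end SeparatedSets

section GrowthRate

-- Integrality of `b` and `K` matters because `Real.log 0 = 0`: their logarithms are nonnegative.
theorem log_le_log_add_log_of_le_natCast_mul {a : ℝ} {K b : ℕ} (ha : 0 ≤ a) (h : a ≤ K * b) :
    Real.log a ≤ Real.log K + Real.log b := by
  rcases ha.eq_or_lt with rfl | ha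
  · rw [Real.log_zero]
    exact add_nonneg (Real.log_natCast_nonneg K) (Real.log_natCast_nonneg b)
  · have hKb : (K * b : ℝ) ≠ 0 := (ha.trans_le h).ne'
    rw [← Real.log_mul (left_ne_zero_of_mul hKb) (right_ne_zero_of_mul hKb)]
    exact Real.log_le_log ha h

theorem limsup_log_div_le_of_le_natCast_mul {a : ℕ → ℝ} {b : ℕ → ℕ} (K : ℕ) (ha : ∀ n, 0 ≤ a n)
    (h : ∀ n, a n ≤ K * b n) :
    limsup (fun n : ℕ ↦ ((Real.log (a n) / n : ℝ) : EReal)) atTop ≤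
      limsup (fun n : ℕ ↦ ((Real.log (b n) / n : ℝ) : EReal)) atTop := by
  have hK : limsup (fun n : ℕ ↦ ((Real.log K / n : ℝ) : EReal)) atTop = 0 :=
    (EReal.tendsto_coe.2 (tendsto_const_div_atTop_nhds_zero_nat (Real.log K))).limsup_eq
  calc limsup (fun n : ℕ ↦ ((Real.log (a n) / n : ℝ) : EReal)) atTop
      ≤ limsup ((fun n : ℕ ↦ ((Real.log K / n : ℝ) : EReal)) +
          fun n : ℕ ↦ ((Real.log (b n) / n : ℝ) : EReal)) atTop := by
        refine limsup_le_limsup (Eventually.of_forall fun n ↦ ?_)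
        rw [Pi.add_apply, ← EReal.coe_add, EReal.coe_le_coe_iff, ← add_div]
        gcongr
        exact log_le_log_add_log_of_le_natCast_mul (ha n) (h n)
    _ ≤ limsup (fun n : ℕ ↦ ((Real.log K / n : ℝ) : EReal)) atTop +
          limsup (fun n : ℕ ↦ ((Real.log (b n) / n : ℝ) : EReal)) atTop :=
        EReal.limsup_add_le (Or.inl (by simp [hK])) (Or.inl (by simp [hK]))
    _ = limsup (fun n : ℕ ↦ ((Real.log (b n) / n : ℝ) : EReal)) atTop := by rw [hK, zero_add]

end GrowthRate

section Comparison

variable {X Y : Type*} [MetricSpace X] [MetricSpace Y] [CompactSpace Y] {T : X → X} {S : Y → Y}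
  {π : X → Y} {D : Set (X × ℕ)} {D' : Set (Y × ℕ)}

theorem presScale_zero_le_of_card_le {ε δ : ℝ} (hδ : 0 < δ) (K : ℕ)
    (hD : ∀ p ∈ D, (π p.1, p.2) ∈ D')
    (hK : ∀ n y, ∀ E ∈ sepSets T D n ε, (∀ x ∈ E, dynDist S n (π x) y < δ) → E.card ≤ K) :
    presScale T (fun _ ↦ 0) D ε ≤ presScale S (fun _ ↦ 0) D' δ := by
  classical
  choose F hF using fun n ↦ exists_maximalFor_card_sepSets S D' n hδ
  simp only [presScale, partSum_zero_eq_card (hF _)]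
  refine limsup_log_div_le_of_le_natCast_mul K (fun n ↦ partSum_zero_nonneg) fun n ↦
    partSum_zero_le fun E hE ↦ ?_
  have hcover : E ⊆ (F n).biUnion fun y ↦ E.filter fun x ↦ dynDist S n (π x) y < δ := by
    intro x hx
    obtain ⟨y, hy, hxy⟩ := exists_dynDist_lt_of_maximalFor_card (hF n) hδ (hD _ (hE.1 x hx))
    exact Finset.mem_biUnion.2 ⟨y, hy, Finset.mem_filter.2 ⟨hx, hxy⟩⟩
  have hcard : E.card ≤ (F n).card * K :=
    (Finset.card_le_card hcover).trans <| Finset.card_biUnion_le_card_mul _ _ K fun y _ ↦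
      hK n y _ (mem_sepSets_of_subset (Finset.filter_subset _ _) hE)
        fun x hx ↦ (Finset.mem_filter.1 hx).2
  rw [mul_comm]
  exact_mod_cast hcard

theorem entSeg_le_of_card_le (hD : ∀ p ∈ D, (π p.1, p.2) ∈ D')
    (hK : ∀ ε > 0, ∃ δ > 0, ∃ K : ℕ, ∀ n y, ∀ E ∈ sepSets T D n ε,
      (∀ x ∈ E, dynDist S n (π x) y < δ) → E.card ≤ K) :
    entSeg T D ≤ entSeg S D' := by
  refine iSup₂_le fun ε hε ↦ ?_
  obtain ⟨δ, hδ, K, hK⟩ := hK ε hε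
  exact (presScale_zero_le_of_card_le hδ K hD hK).trans
    (le_iSup₂ (f := fun (δ : ℝ) (_ : 0 < δ) ↦ presScale S (fun _ ↦ (0 : ℝ)) D' δ) δ hδ)

end Comparison

section Holonomy

theorem mapsTo_Lam {M : Type*} (f : M → M) : Set.MapsTo f (Lam f) (Lam f) := by
  intro x hx
  refine Set.mem_iInter.2 fun n ↦ ?_
  obtain ⟨w, -, rfl⟩ := Set.mem_iInter.1 hx n
  exact ⟨f w, Set.mem_univ _, (Function.Commute.refl f).iterate_left n w⟩

theorem dynDist_le_dist_of_same_fiber {N M : Type*} [MetricSpace M] {g : N → N} {f : M → M}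
    {pr : M → N} (hsemi : Function.Semiconj pr f g)
    (hfib : ∀ x y, pr x = pr y → dist (f x) (f y) ≤ dist x y) (n : ℕ) {x y : M}
    (hxy : pr x = pr y) : dynDist f n x y ≤ dist x y := by
  refine (dynDist_le_iff dist_nonneg).2 fun k _ ↦ ?_
  induction k with
  | zero => rfl
  | succ k ih =>
    rw [Function.iterate_succ_apply', Function.iterate_succ_apply']
    refine (hfib _ _ ?_).trans (ih (by omega))
    rw [hsemi.iterate_right k x, hsemi.iterate_right k y, hxy]

/-- Invariant holonomies between the fibers of `pr` in `Λ`: the maps `hol a b` send the fiber over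
`a` to the fiber over `b`, commute with the dynamics, and bound the metric of `Λ` above as in (H4)
with constant `C`. -/
structure IsInvariantHolonomy {N M : Type*} [MetricSpace N] [MetricSpace M] (f : M → M) (g : N → N)
    (pr : M → N) (Λ : Set M) (hol : N → N → M → M) (C : ℝ) : Prop where
  mapsTo : ∀ a b, Set.MapsTo (hol a b) (pr ⁻¹' {a} ∩ Λ) (pr ⁻¹' {b} ∩ Λ)
  map_hol : ∀ a b, ∀ z ∈ pr ⁻¹' {a} ∩ Λ, f (hol a b z) = hol (g a) (g b) (f z)
  dist_le : ∀ x ∈ Λ, ∀ y ∈ Λ,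
    dist x y ≤ C * (dist (pr x) (pr y) + dist (hol (pr x) (pr y) x) y)

variable {N M : Type*} [MetricSpace N] [MetricSpace M] {f : M → M} {g : N → N} {pr : M → N}
  {Λ : Set M} {hol : N → N → M → M} {C : ℝ}

namespace IsInvariantHolonomy

theorem hol_mem (h : IsInvariantHolonomy f g pr Λ hol C) (b : N) {x : M} (hx : x ∈ Λ) :
    hol (pr x) b x ∈ Λ :=
  (h.mapsTo (pr x) b ⟨rfl, hx⟩).2

theorem pr_hol (h : IsInvariantHolonomy f g pr Λ hol C) (b : N) {x : M} (hx : x ∈ Λ) :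
    pr (hol (pr x) b x) = b :=
  (h.mapsTo (pr x) b ⟨rfl, hx⟩).1

theorem iterate_hol (h : IsInvariantHolonomy f g pr Λ hol C) (hsemi : Function.Semiconj pr f g)
    (hΛ : Set.MapsTo f Λ Λ) (k : ℕ) (b : N) {x : M} (hx : x ∈ Λ) :
    f^[k] (hol (pr x) b x) = hol (pr (f^[k] x)) (g^[k] b) (f^[k] x) := by
  induction k with
  | zero => rfl
  | succ k ih =>
    simp only [Function.iterate_succ_apply', ih, hsemi (f^[k] x)]
    exact h.map_hol _ _ _ ⟨rfl, hΛ.iterate k hx⟩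

theorem dist_hol_le (h : IsInvariantHolonomy f g pr Λ hol C) (b : N) {x : M} (hx : x ∈ Λ) :
    dist x (hol (pr x) b x) ≤ C * dist (pr x) b := by
  simpa only [h.pr_hol b hx, dist_self, add_zero] using h.dist_le x hx _ (h.hol_mem b hx)

theorem dynDist_hol_le (h : IsInvariantHolonomy f g pr Λ hol C)
    (hsemi : Function.Semiconj pr f g) (hΛ : Set.MapsTo f Λ Λ) (hC : 0 ≤ C) (n : ℕ) (b : N)
    {x : M} (hx : x ∈ Λ) :
    dynDist f n x (hol (pr x) b x) ≤ C * dynDist g n (pr x) b := by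
  refine (dynDist_le_iff (mul_nonneg hC (dynDist_nonneg ..))).2 fun k hk ↦ ?_
  calc dist (f^[k] x) (f^[k] (hol (pr x) b x))
      = dist (f^[k] x) (hol (pr (f^[k] x)) (g^[k] b) (f^[k] x)) := by
        rw [h.iterate_hol hsemi hΛ k b hx]
    _ ≤ C * dist (pr (f^[k] x)) (g^[k] b) := h.dist_hol_le _ (hΛ.iterate k hx)
    _ = C * dist (g^[k] (pr x)) (g^[k] b) := by rw [hsemi.iterate_right k x]
    _ ≤ C * dynDist g n (pr x) b :=
        mul_le_mul_of_nonneg_left (dist_iterate_le_dynDist hk _ _) hC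

theorem dynDist_le_add_dist_hol (h : IsInvariantHolonomy f g pr Λ hol C)
    (hsemi : Function.Semiconj pr f g) (hΛ : Set.MapsTo f Λ Λ)
    (hfib : ∀ x y, pr x = pr y → dist (f x) (f y) ≤ dist x y) (hC : 0 ≤ C) (n : ℕ) (b : N)
    {x y : M} (hx : x ∈ Λ) (hy : y ∈ Λ) :
    dynDist f n x y ≤ C * dynDist g n (pr x) b + dist (hol (pr x) b x) (hol (pr y) b y) +
      C * dynDist g n (pr y) b := by
  have hfiber : pr (hol (pr x) b x) = pr (hol (pr y) b y) := by
    rw [h.pr_hol b hx, h.pr_hol b hy]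
  calc dynDist f n x y
      ≤ dynDist f n x (hol (pr x) b x) + dynDist f n (hol (pr x) b x) (hol (pr y) b y) +
          dynDist f n y (hol (pr y) b y) := by
        linarith [dynDist_triangle f n x (hol (pr y) b y) y,
          dynDist_triangle f n x (hol (pr x) b x) (hol (pr y) b y),
          dynDist_comm f n y (hol (pr y) b y)]
    _ ≤ _ := by
        gcongr
        · exact h.dynDist_hol_le hsemi hΛ hC n b hx
        · exact dynDist_le_dist_of_same_fiber hsemi hfib n hfiber
        · exact h.dynDist_hol_le hsemi hΛ hC n b hy

end IsInvariantHolonomy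

theorem entropy_lift_le_base_general [CompactSpace N] (hsemi : Function.Semiconj pr f g)
    (hΛ : Set.MapsTo f Λ Λ) (hΛtb : TotallyBounded Λ)
    (hfib : ∀ x y, pr x = pr y → dist (f x) (f y) ≤ dist x y)
    (hC : 0 < C) (hhol : IsInvariantHolonomy f g pr Λ hol C) (Dhat : Set (N × ℕ)) :
    entSeg f {p : M × ℕ | p.1 ∈ Λ ∧ (pr p.1, p.2) ∈ Dhat} ≤ entSeg g Dhat := by
  refine entSeg_le_of_card_le (fun p hp ↦ hp.2) fun ε hε ↦ ?_
  obtain ⟨K, hK⟩ := exists_card_le_of_pairwise_le_dist (ι := M) hΛtb (half_pos hε)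
  refine ⟨ε / (4 * C), by positivity, K, fun n b E hE hnear ↦
    hK E (fun x ↦ hol (pr x) b x) (fun x hx ↦ hhol.hol_mem b (hE.1 x hx).1) ?_⟩
  intro x hx y hy hxy
  have hsep : ε ≤ dynDist f n x y := hE.2 x hx y hy hxy
  have hslide := hhol.dynDist_le_add_dist_hol hsemi hΛ hfib hC.le n b (hE.1 x hx).1 (hE.1 y hy).1
  have hquarter {z : M} (hz : z ∈ E) : C * dynDist g n (pr z) b < ε / 4 :=
    (mul_lt_mul_of_pos_left (hnear z hz) hC).trans_eq (by field_simp)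
  linarith [hquarter hx, hquarter hy]

end Holonomy

/-- For any collection `𝒟̂ ⊆ N × ℕ` of orbit segments for `g`, the entropy
of its lift `𝒟 = {(x,n) ∈ Λ × ℕ : (π(x),n) ∈ 𝒟̂}` for `f|_Λ` is bounded by the entropy
of `𝒟̂` for `g`. -/
theorem entropy_lift_le_base
    {N : Type*} [MetricSpace N] [CompactSpace N] [ConnectedSpace N]
    {M : Type*} [MetricSpace M] [CompactSpace M]
    (g : N → N) (hg : Continuous g)
    (f : M → M) (hf : Continuous f) (hfinj : Function.Injective f)
    (pr : M → N) (hpr : Continuous pr) (hprs : Function.Surjective pr)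
    (hsemi : ∀ x : M, pr (f x) = g (pr x))
    -- (H3): uniform contraction of the fibers
    (lams : ℝ) (hlams : lams ∈ Set.Ioo (0 : ℝ) 1)
    (hH3 : ∀ x y : M, pr x = pr y → dist (f x) (f y) ≤ lams * dist x y)
    -- (H4): invariant holonomies comparing the metrics on `M` and `N`
    (hol : N → N → M → M) (C : ℝ) (hC : 1 ≤ C)
    (hholmap : ∀ a b : N, Set.MapsTo (hol a b) (pr ⁻¹' {a} ∩ Lam f) (pr ⁻¹' {b} ∩ Lam f))
    (hholinv : ∀ a b : N, ∀ z ∈ pr ⁻¹' {a} ∩ Lam f, f (hol a b z) = hol (g a) (g b) (f z))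
    (hholdist : ∀ x ∈ Lam f, ∀ y ∈ Lam f,
      (1 / C) * (dist (pr x) (pr y) + dist (hol (pr x) (pr y) x) y) ≤ dist x y ∧
      dist x y ≤ C * (dist (pr x) (pr y) + dist (hol (pr x) (pr y) x) y)) :
    ∀ Dhat : Set (N × ℕ),
      entSeg f {p : M × ℕ | p.1 ∈ Lam f ∧ (pr p.1, p.2) ∈ Dhat} ≤ entSeg g Dhat := by
  intro Dhat
  exact entropy_lift_le_base_general hsemi (mapsTo_Lam f)
    (isCompact_univ.totallyBounded.subset (Set.subset_univ _))
    (fun x y hxy ↦ (hH3 x y hxy).trans (mul_le_of_le_one_left dist_nonneg hlams.2.le))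
    (one_pos.trans_le hC) ⟨hholmap, hholinv, fun x hx y hy ↦ (hholdist x hx y hy).2⟩ Dhat
end

section
/- Concatenation property of good orbit segments: if (x, n) ∈ 𝒢 and (f^n(x), m) ∈ 𝒢, then (x, n + m) ∈ 𝒢. -/
/-!
Write `S k` for the Birkhoff sum of `χ_A - α` over the first `k` points of the orbit of `x`.
The average of `χ_A` over times `k, …, n - 1` is `< α` exactly when `S n < S k`, so `(x, n)` is good
if and only if `S` attains a strict minimum over `{0, …, n}` at `n`. By the cocycle identity, `S`
after time `n` is, up to the constant `S n`, the Birkhoff sum along the orbit of `f^[n] x`; hence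
`S (n + m) < S k` for `n ≤ k < n + m`, and `S (n + m) ≤ S n < S k` for `k < n`.
-/

/-- The orbit segments `(x, n)` along which the Birkhoff sums of `φ` have a strict record minimum
at the final time `n`. Good orbit segments are the case `φ = χ_A - α`; comparing Birkhoff sums
instead of averages avoids division by the length of the segment. -/
def recordMinSeg {X M : Type*} [AddCommMonoid M] [LT M] (f : X → X) (φ : X → M) : Set (X × ℕ) :=
  {p | ∀ k < p.2, birkhoffSum f φ p.2 p.1 < birkhoffSum f φ k p.1}

theorem goodSeg_concat_general {X M : Type*} [AddCommMonoid M] [Preorder M] [AddLeftStrictMono M]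
    {f : X → X} {φ : X → M} {x : X} {n m : ℕ}
    (h₁ : (x, n) ∈ recordMinSeg f φ) (h₂ : (f^[n] x, m) ∈ recordMinSeg f φ) :
    (x, n + m) ∈ recordMinSeg f φ := by
  have lt_after_junction : ∀ l < m, birkhoffSum f φ (n + m) x < birkhoffSum f φ (n + l) x := by
    intro l hl
    rw [birkhoffSum_add, birkhoffSum_add]
    exact add_lt_add_right (h₂ l hl) _
  have le_at_junction : birkhoffSum f φ (n + m) x ≤ birkhoffSum f φ n x := by
    rcases m.eq_zero_or_pos with rfl | hm
    · exact le_rfl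
    · exact (lt_after_junction 0 hm).le
  intro k hk
  rcases lt_or_ge k n with hkn | hnk
  · exact le_at_junction.trans_lt (h₁ k hkn)
  · obtain ⟨l, rfl⟩ := Nat.exists_eq_add_of_le hnk
    exact lt_after_junction l (Nat.add_lt_add_iff_left.mp hk)

theorem birkhoffSum_sub_const_lt_iff {X K : Type*} [Field K] [LinearOrder K]
    [IsStrictOrderedRing K] (f : X → X) (g : X → K) (a : K) (x : X) {k n : ℕ} (hkn : k < n) :
    birkhoffSum f (fun y => g y - a) n x < birkhoffSum f (fun y => g y - a) k x ↔
      (1 / ((n - k : ℕ) : K)) * ∑ i ∈ Finset.Ico k n, g (f^[i] x) < a := by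
  have length_pos : (0 : K) < (n - k : ℕ) := Nat.cast_pos.mpr (Nat.sub_pos_of_lt hkn)
  have sum_sub_eq : birkhoffSum f (fun y => g y - a) n x - birkhoffSum f (fun y => g y - a) k x =
      ∑ i ∈ Finset.Ico k n, g (f^[i] x) - (n - k : ℕ) * a := by
    rw [birkhoffSum, birkhoffSum, ← Finset.sum_Ico_eq_sub _ hkn.le, Finset.sum_sub_distrib,
      Finset.sum_const, Nat.card_Ico, nsmul_eq_mul]
  rw [one_div, inv_mul_lt_iff₀ length_pos, ← sub_neg, sum_sub_eq, sub_neg]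

theorem goodSeg_eq_recordMinSeg {X : Type*} (f : X → X) (A : Set X) (α : ℝ) :
    goodSeg f A α = recordMinSeg f (fun y => A.indicator (fun _ => (1 : ℝ)) y - α) := by
  ext ⟨x, n⟩
  constructor
  · rintro (hn | h) k (hk : k < n)
    · exact absurd (hk.trans_eq hn) (Nat.not_lt_zero k)
    · have average_lt := h (n - k) (Nat.sub_pos_of_lt hk) (Nat.sub_le n k)
      rw [Nat.sub_sub_self hk.le] at average_lt
      exact (birkhoffSum_sub_const_lt_iff f _ α x hk).mpr average_lt
  · refine fun h => Or.inr fun j hj (hjn : j ≤ n) => ?_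
    have hlt : n - j < n := Nat.sub_lt (hj.trans hjn) hj
    have average_lt := (birkhoffSum_sub_const_lt_iff f _ α x hlt).mp (h (n - j) hlt)
    rwa [Nat.sub_sub_self hjn] at average_lt

/-- Concatenation property of good orbit segments: if `(x,n) ∈ 𝒢` and
`(f^n(x), m) ∈ 𝒢`, then `(x, n+m) ∈ 𝒢`. -/
theorem goodSeg_concat {X : Type*} (f : X → X) (A : Set X) (α : ℝ)
    (x : X) (n m : ℕ)
    (h₁ : (x, n) ∈ goodSeg f A α) (h₂ : (f^[n] x, m) ∈ goodSeg f A α) :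
    (x, n + m) ∈ goodSeg f A α := by
  rw [goodSeg_eq_recordMinSeg] at h₁ h₂ ⊢
  exact goodSeg_concat_general h₁ h₂
end

section
/- Decomposition of orbit segments: for every x ∈ X and n ∈ ℕ, let s be the largest element of {0, 1, …, n} such that (x, s) ∈ 𝒢. If s < n, then (f^s(x), n − s) ∈ 𝒮, i.e. (1/(n−s)) ∑_{i=s}^{n−1} χ_A(f^i x) ≥ α. -/
section RecordLow

variable {β : Type*} [LinearOrder β] {S : ℕ → β} {s n : ℕ}

/-- `t` is a strict record low of the sequence `S`: the value `S t` is below all earlier values.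
Time `0` is always a record low. -/
def IsRecordLow {β : Type*} [LT β] (S : ℕ → β) (t : ℕ) : Prop :=
  ∀ k < t, S t < S k

lemma exists_isRecordLow_le_of_lt (h : S n < S s) :
    ∃ t ≤ n, IsRecordLow S t ∧ S t < S s := by
  classical
  have below : ∃ m, S m < S s := ⟨n, h⟩
  refine ⟨Nat.find below, Nat.find_min' below h, fun k hk => ?_, Nat.find_spec below⟩
  exact (Nat.find_spec below).trans_le (not_lt.1 (Nat.find_min below hk))

lemma IsRecordLow.le_of_forall_le (hs : IsRecordLow S s)
    (hmax : ∀ t ≤ n, IsRecordLow S t → t ≤ s) : S s ≤ S n := by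
  by_contra! hlt
  obtain ⟨t, htn, ht, hts⟩ := exists_isRecordLow_le_of_lt hlt
  rcases (hmax t htn ht).eq_or_lt with rfl | h
  · exact hts.false
  · exact hts.asymm (hs t h)

end RecordLow

section TailAverage

variable {K : Type*} [Field K] [LinearOrder K] [IsStrictOrderedRing K]
  {c : ℕ → K} {α : K} {k m n s t : ℕ}

/-- The accumulated excess of the sequence `c` over the level `α` before time `m`. -/
def excess {K : Type*} [Ring K] (c : ℕ → K) (α : K) (m : ℕ) : K :=
  ∑ i ∈ Finset.range m, (c i - α)

/-- `t` is a good time for `c` at level `α`: the average of `c` over each nonempty final stretch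
`[k, t)` of `[0, t)` is below `α`. This is the condition defining `goodSeg`, indexed by the start
`k` of the stretch instead of its length. -/
def IsGoodTime {K : Type*} [Field K] [LT K] (c : ℕ → K) (α : K) (t : ℕ) : Prop :=
  ∀ k < t, (1 / ((t - k : ℕ) : K)) * ∑ i ∈ Finset.Ico k t, c i < α

lemma excess_sub_excess {K : Type*} [Ring K] (c : ℕ → K) (α : K) {k m : ℕ} (h : k ≤ m) :
    excess c α m - excess c α k = ∑ i ∈ Finset.Ico k m, c i - ((m - k : ℕ) : K) * α := by
  rw [excess, excess, ← Finset.sum_Ico_eq_sub _ h, Finset.sum_sub_distrib, Finset.sum_const,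
    Nat.card_Ico, nsmul_eq_mul]

lemma average_lt_iff_excess_lt (h : k < m) :
    (1 / ((m - k : ℕ) : K)) * ∑ i ∈ Finset.Ico k m, c i < α ↔ excess c α m < excess c α k := by
  have hpos : (0 : K) < (m - k : ℕ) := Nat.cast_pos.2 (Nat.sub_pos_of_lt h)
  rw [one_div_mul_eq_div, div_lt_iff₀' hpos, ← sub_neg, ← excess_sub_excess c α h.le, sub_neg]

lemma isGoodTime_iff_isRecordLow : IsGoodTime c α t ↔ IsRecordLow (excess c α) t :=
  forall₂_congr fun _ hk => average_lt_iff_excess_lt hk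

theorem goodSeg_decomposition_general (hs : IsGoodTime c α s)
    (hmax : ∀ t ≤ n, IsGoodTime c α t → t ≤ s) (hlt : s < n) :
    α ≤ (1 / ((n - s : ℕ) : K)) * ∑ i ∈ Finset.Ico s n, c i := by
  simp only [isGoodTime_iff_isRecordLow] at hs hmax
  rw [← not_lt, average_lt_iff_excess_lt hlt, not_lt]
  exact hs.le_of_forall_le hmax

end TailAverage

lemma mem_goodSeg_iff_isGoodTime {X : Type*} {f : X → X} {A : Set X} {α : ℝ} {x : X} {t : ℕ} :
    (x, t) ∈ goodSeg f A α ↔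
      IsGoodTime (fun i => Set.indicator A (fun _ => (1 : ℝ)) (f^[i] x)) α t := by
  constructor
  · rintro (rfl | h) k hk
    · exact absurd hk k.not_lt_zero
    · simpa only [Nat.sub_sub_self hk.le] using
        h (t - k) (Nat.sub_pos_of_lt hk) (Nat.sub_le t k)
  · refine fun h => Or.inr fun j hj hjt => ?_
    simpa only [Nat.sub_sub_self hjt] using h (t - j) (Nat.sub_lt (hj.trans hjt) hj)

/-- Decomposition of orbit segments: if `s` is the largest element of
`{0,…,n}` with `(x,s) ∈ 𝒢` and `s < n`, then `(f^s(x), n-s) ∈ 𝒮`, i.e. the average of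
`χ_A` over the orbit segment from time `s` to time `n` is at least `α`. -/
theorem goodSeg_decomposition {X : Type*} (f : X → X) (A : Set X) (α : ℝ)
    (x : X) (n s : ℕ) (hsn : s ≤ n)
    (hs : (x, s) ∈ goodSeg f A α)
    (hmax : ∀ t : ℕ, t ≤ n → (x, t) ∈ goodSeg f A α → t ≤ s)
    (hlt : s < n) :
    α ≤ (1 / ((n - s : ℕ) : ℝ)) * ∑ i ∈ Finset.Ico s n,
      Set.indicator A (fun _ => (1 : ℝ)) (f^[i] x) :=
  goodSeg_decomposition_general (mem_goodSeg_iff_isGoodTime.1 hs)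
    (fun t ht h => hmax t ht (mem_goodSeg_iff_isGoodTime.2 h)) hlt
end
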